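/- For all integers k ≥ 1 and q ≥ 1 and every integer s with 0 ≤ s ≤ q, the quantum transition capacity satisfies ⟦SIZE[k·s] ∖ CL → CL⟧_k ≤ 2·e·k·√(10·(q+1)/M), where e is Euler's number. -/

import Mathlib

noncomputable section

/- `Ȳ = Y ∪ {⊥}` is modeled by `Option Y` (`⊥ = none`), databases by `X → Option Y`,
and `ℂ[DB]` by `EuclideanSpace ℂ (X → Option Y)`. -/

/-- matrix (in the computational basis) of the single-register unitary `Comp` -/
def compMat (Y : Type*) [Fintype Y] [DecidableEq Y] :
    Matrix (Option Y) (Option Y) ℂ :=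
  Matrix.of fun u v =>
    match u, v with
    | none, none => 0
    | some _, none => ((Real.sqrt (Fintype.card Y) : ℝ) : ℂ)⁻¹
    | none, some _ => ((Real.sqrt (Fintype.card Y) : ℝ) : ℂ)⁻¹
    | some a, some b => (if a = b then (1 : ℂ) else 0) - ((Fintype.card Y : ℕ) : ℂ)⁻¹

/-- matrix of the diagonal unitary `O_ŷ` associated to a character `ŷ` of `Y` -/
def oMat {Y : Type*} [Fintype Y] [DecidableEq Y] [AddCommGroup Y] (c : AddChar Y ℂ) :
    Matrix (Option Y) (Option Y) ℂ :=
  Matrix.diagonal fun u => Option.elim u 1 fun r => c r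

/-- matrix of the single-register compressed oracle `cO_ŷ = Comp ∘ O_ŷ ∘ Comp` -/
def cOMat {Y : Type*} [Fintype Y] [DecidableEq Y] [AddCommGroup Y] (c : AddChar Y ℂ) :
    Matrix (Option Y) (Option Y) ℂ :=
  compMat Y * oMat c * compMat Y

/-- a single-register operator (given by its matrix `m`) acting at register `x0` -/
def liftMat {X Y : Type*} [Fintype X] [DecidableEq X] [DecidableEq Y] (x0 : X)
    (m : Matrix (Option Y) (Option Y) ℂ) :
    Matrix (X → Option Y) (X → Option Y) ℂ :=
  Matrix.of fun D' D => if ∀ a, a ≠ x0 → D' a = D a then m (D' x0) (D x0) else 0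

/-- matrix of `cO_{x,ŷ}`: the composition of `cO_{ŷ i}` acting at register `x i` -/
def cOparMat {X Y : Type*} [Fintype X] [DecidableEq X] [Fintype Y] [DecidableEq Y]
    [AddCommGroup Y] {k : ℕ} (x : Fin k → X) (c : Fin k → AddChar Y ℂ) :
    Matrix (X → Option Y) (X → Option Y) ℂ :=
  (List.ofFn fun i : Fin k => liftMat (x i) (cOMat (c i))).prod

/-- matrix of the orthogonal projection onto `span{e_D : D ∈ P}` -/
def projMat {ι : Type*} [DecidableEq ι] (P : Set ι) : Matrix ι ι ℂ := by
  classical exact Matrix.of fun i j => if i = j ∧ i ∈ P then 1 else 0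

/-- the (continuous linear) operator on `ℓ²` given by a matrix -/
def toOp {ι : Type*} [Fintype ι] [DecidableEq ι] (m : Matrix ι ι ℂ) :
    EuclideanSpace ℂ ι →L[ℂ] EuclideanSpace ℂ ι :=
  LinearMap.toContinuousLinearMap (Matrix.toEuclideanLin m)

/-- `D|^x`: the set of databases that coincide with `D` outside of `x` -/
def agreeOff {X Y : Type*} {k : ℕ} (D : X → Option Y) (x : Fin k → X) :
    Set (X → Option Y) :=
  {D' | ∀ a : X, (∀ i, x i ≠ a) → D' a = D a}

/-- The quantum transition capacity `⟦P → P' | X₀⟧_k`: the supremum, over all `x ∈ X₀^k`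
with pairwise distinct entries, all `k`-tuples `ŷ` of characters of `Y` and all databases `D`,
of `‖P'|_{D|^x} ∘ cO_{x,ŷ} ∘ P|_{D|^x}‖` (`0` if the range is empty). -/
def qtc {X Y : Type*} [Fintype X] [DecidableEq X] [Fintype Y] [DecidableEq Y]
    [AddCommGroup Y] (P P' : Set (X → Option Y)) (k : ℕ) (X₀ : Set X) : ℝ :=
  sSup {v : ℝ | ∃ (x : Fin k → X) (c : Fin k → AddChar Y ℂ) (D : X → Option Y),
    Function.Injective x ∧ (∀ i, x i ∈ X₀) ∧
    v = ‖(toOp (projMat (P' ∩ agreeOff D x))).comp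
          ((toOp (cOparMat x c)).comp (toOp (projMat (P ∩ agreeOff D x))))‖}

end

/-- `CL`: the databases containing a collision, i.e. `D x = D x' ≠ ⊥` for some `x ≠ x'` -/
def CL {X Y : Type*} : Set (X → Option Y) :=
  {D | ∃ a b : X, a ≠ b ∧ D a = D b ∧ D a ≠ none}

/-- `SIZE s`: the databases with at most `s` non-`⊥` entries -/
def SIZE {X Y : Type*} (s : ℕ) : Set (X → Option Y) :=
  {D | {a | D a ≠ none}.Finite ∧ {a | D a ≠ none}.ncard ≤ s}

/-- the squared `ℓ²`-norm of a vector -/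
noncomputable def sqNorm {ι : Type*} [Fintype ι] (v : ι → ℂ) : ℝ := ∑ i, ‖v i‖ ^ 2

lemma sqNorm_nonneg {ι : Type*} [Fintype ι] (v : ι → ℂ) : 0 ≤ sqNorm v :=
  Finset.sum_nonneg fun _ _ => sq_nonneg _

lemma norm_toOp_sq {ι : Type*} [Fintype ι] [DecidableEq ι] (m : Matrix ι ι ℂ)
    (v : EuclideanSpace ℂ ι) : ‖toOp m v‖ ^ 2 = sqNorm (m.mulVec v.ofLp) := by
  rw [EuclideanSpace.norm_sq_eq]
  rfl

lemma ofLp_toOp {ι : Type*} [Fintype ι] [DecidableEq ι] (m : Matrix ι ι ℂ)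
    (v : EuclideanSpace ℂ ι) : (toOp m v).ofLp = m.mulVec v.ofLp := rfl

lemma sqNorm_eq_dotProduct {ι : Type*} [Fintype ι] (v : ι → ℂ) :
    ((sqNorm v : ℝ) : ℂ) = star v ⬝ᵥ v := by
  simp only [sqNorm, dotProduct, Pi.star_apply, Complex.ofReal_sum]
  refine Finset.sum_congr rfl fun i _ => ?_
  rw [Complex.star_def, Complex.conj_mul']
  push_cast
  rfl

lemma sqNorm_mulVec_of_mem_unitary {ι : Type*} [Fintype ι] [DecidableEq ι] {m : Matrix ι ι ℂ}
    (hm : m ∈ Matrix.unitaryGroup ι ℂ) (v : ι → ℂ) : sqNorm (m.mulVec v) = sqNorm v := by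
  have h : ((sqNorm (m.mulVec v) : ℝ) : ℂ) = ((sqNorm v : ℝ) : ℂ) := by
    rw [sqNorm_eq_dotProduct, sqNorm_eq_dotProduct, Matrix.star_mulVec,
      Matrix.dotProduct_mulVec, Matrix.vecMul_vecMul, ← Matrix.star_eq_conjTranspose,
      Matrix.mem_unitaryGroup_iff'.1 hm, Matrix.vecMul_one]
  exact_mod_cast h

lemma projMat_mulVec {ι : Type*} [Fintype ι] [DecidableEq ι] (P : Set ι) [DecidablePred (· ∈ P)]
    (v : ι → ℂ) (i : ι) : (projMat P).mulVec v i = if i ∈ P then v i else 0 := by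
  simp only [Matrix.mulVec, dotProduct, projMat, Matrix.of_apply]
  rw [Finset.sum_eq_single i]
  · split_ifs <;> simp_all
  · intro j _ hj
    simp [hj.symm]
  · simp

lemma sqNorm_projMat_mulVec {ι : Type*} [Fintype ι] [DecidableEq ι] (P : Set ι)
    [DecidablePred (· ∈ P)] (v : ι → ℂ) :
    sqNorm ((projMat P).mulVec v) = ∑ i, if i ∈ P then ‖v i‖ ^ 2 else 0 := by
  unfold sqNorm
  refine Finset.sum_congr rfl fun i _ => ?_
  rw [projMat_mulVec]
  split_ifs <;> simp

lemma sqNorm_projMat_mulVec_le {ι : Type*} [Fintype ι] [DecidableEq ι] (P : Set ι)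
    (v : ι → ℂ) : sqNorm ((projMat P).mulVec v) ≤ sqNorm v := by
  classical
  rw [sqNorm_projMat_mulVec]
  refine Finset.sum_le_sum fun i _ => ?_
  split_ifs
  · exact le_rfl
  · positivity

/-! ### The single-register compressed oracle -/

section Single

variable {Y : Type*} [Fintype Y] [DecidableEq Y] [AddCommGroup Y]

omit [AddCommGroup Y] in
lemma compMat_conjTranspose : (compMat Y).conjTranspose = compMat Y := by
  ext u v
  rcases u with _ | u <;> rcases v with _ | v <;>
    simp [compMat, Matrix.conjTranspose_apply, apply_ite, eq_comm]

omit [DecidableEq Y] in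
lemma sqrt_card_inv_mul_self :
    (((Real.sqrt (Fintype.card Y) : ℝ) : ℂ)⁻¹) * ((Real.sqrt (Fintype.card Y) : ℝ) : ℂ)⁻¹
      = ((Fintype.card Y : ℕ) : ℂ)⁻¹ := by
  rw [← mul_inv, ← Complex.ofReal_mul, Real.mul_self_sqrt (by positivity), Complex.ofReal_natCast]

lemma compMat_mul_self : compMat Y * compMat Y = 1 := by
  have hM : ((Fintype.card Y : ℕ) : ℂ) ≠ 0 := Nat.cast_ne_zero.2 Fintype.card_ne_zero
  have hs := sqrt_card_inv_mul_self (Y := Y)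
  ext u v
  rw [Matrix.mul_apply, Fintype.sum_option]
  rcases u with _ | u <;> rcases v with _ | v <;>
    simp only [compMat, Matrix.of_apply]
  · simp [hs, hM]
  · simp only [zero_mul, zero_add, ← Finset.mul_sum, Finset.sum_sub_distrib]
    simp [hM]
  · simp only [mul_zero, zero_add, ← Finset.sum_mul, Finset.sum_sub_distrib]
    simp [hM]
  · rw [hs]
    simp only [sub_mul, mul_sub, Finset.sum_sub_distrib, ← Finset.mul_sum, ← Finset.sum_mul]
    simp [Matrix.one_apply, hM]

lemma oMat_mem_unitary (c : AddChar Y ℂ) : oMat c ∈ Matrix.unitaryGroup (Option Y) ℂ := by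
  rw [Matrix.mem_unitaryGroup_iff', Matrix.star_eq_conjTranspose, oMat,
    Matrix.diagonal_conjTranspose, Matrix.diagonal_mul_diagonal, ← Matrix.diagonal_one]
  congr 1
  ext u
  rcases u with _ | u
  · simp
  · simp [Complex.conj_mul', AddChar.norm_apply]

lemma compMat_mem_unitary : compMat Y ∈ Matrix.unitaryGroup (Option Y) ℂ := by
  rw [Matrix.mem_unitaryGroup_iff', Matrix.star_eq_conjTranspose, compMat_conjTranspose,
    compMat_mul_self]

lemma cOMat_mem_unitary (c : AddChar Y ℂ) : cOMat c ∈ Matrix.unitaryGroup (Option Y) ℂ :=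
  mul_mem (mul_mem compMat_mem_unitary (oMat_mem_unitary c)) compMat_mem_unitary

lemma sum_norm_sq_row_of_mem_unitary {ι : Type*} [Fintype ι] [DecidableEq ι] {m : Matrix ι ι ℂ}
    (hm : m ∈ Matrix.unitaryGroup ι ℂ) (u : ι) : ∑ a, ‖m u a‖ ^ 2 = 1 := by
  have h := congrFun (congrFun (Matrix.mem_unitaryGroup_iff.1 hm) u) u
  rw [Matrix.mul_apply, Matrix.one_apply_eq] at h
  have h2 : ((∑ a, ‖m u a‖ ^ 2 : ℝ) : ℂ) = ((1 : ℝ) : ℂ) := by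
    rw [Complex.ofReal_one, ← h, Complex.ofReal_sum]
    refine Finset.sum_congr rfl fun a _ => ?_
    rw [Matrix.star_apply, Complex.star_def, Complex.mul_conj']
    push_cast
    rfl
  exact_mod_cast h2

lemma norm_cOMat_diag_ge (c : AddChar Y ℂ) (u : Y) :
    1 - 4 / (Fintype.card Y : ℝ) ≤ ‖cOMat c (some u) (some u)‖ := by
  set M : ℝ := ((Fintype.card Y : ℕ) : ℝ) with hMdef
  have hM : 1 ≤ M := by
    rw [hMdef]; exact_mod_cast Fintype.card_pos
  have hM0 : (M : ℂ) ≠ 0 := by exact_mod_cast (by linarith : M ≠ 0)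
  have hcast : ((Fintype.card Y : ℕ) : ℂ) = (M : ℂ) := by simp [hMdef]
  have hs := sqrt_card_inv_mul_self (Y := Y)
  have hdiag : cOMat c (some u) (some u) =
      c u + ((M : ℂ)⁻¹ - 2 * (M : ℂ)⁻¹ * c u + ((M : ℂ)⁻¹) ^ 2 * ∑ w, c w) := by
    rw [cOMat, oMat, Matrix.mul_apply, Fintype.sum_option]
    simp only [Matrix.mul_diagonal, compMat, Matrix.of_apply, Option.elim, mul_one]
    rw [hs, hcast]
    have : ∀ w : Y, ((if u = w then (1 : ℂ) else 0) - (M : ℂ)⁻¹) * c w *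
        ((if w = u then (1 : ℂ) else 0) - (M : ℂ)⁻¹) =
        (if u = w then (1 - 2 * (M : ℂ)⁻¹) * c w else 0) + ((M : ℂ)⁻¹) ^ 2 * c w := by
      intro w
      by_cases h : u = w
      · subst h; simp; ring
      · simp [h, Ne.symm h]; ring
    rw [Finset.sum_congr rfl fun w _ => this w, Finset.sum_add_distrib, Finset.sum_ite_eq,
      if_pos (Finset.mem_univ _), ← Finset.mul_sum]
    ring
  have hsum : ‖∑ w, c w‖ ≤ M := by
    refine (norm_sum_le _ _).trans ?_
    simp [AddChar.norm_apply, hMdef]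
  have hrest : ‖(M : ℂ)⁻¹ - 2 * (M : ℂ)⁻¹ * c u + ((M : ℂ)⁻¹) ^ 2 * ∑ w, c w‖ ≤ 4 / M := by
    have h1 : ‖(M : ℂ)⁻¹‖ = M⁻¹ := by
      rw [norm_inv, Complex.norm_real, Real.norm_of_nonneg (by linarith)]
    calc _ ≤ ‖(M : ℂ)⁻¹‖ + ‖2 * (M : ℂ)⁻¹ * c u‖ + ‖((M : ℂ)⁻¹) ^ 2 * ∑ w, c w‖ :=
          (norm_add_le _ _).trans (add_le_add_left (norm_sub_le _ _) _)
      _ ≤ M⁻¹ + 2 * M⁻¹ + M⁻¹ ^ 2 * M := by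
          rw [norm_mul, norm_mul, norm_mul, norm_pow, h1, AddChar.norm_apply]
          simp only [Complex.norm_ofNat, mul_one]
          gcongr
      _ = 4 / M := by field_simp; norm_num
  rw [hdiag]
  have h3 := norm_sub_le_norm_add (c u)
    ((M : ℂ)⁻¹ - 2 * (M : ℂ)⁻¹ * c u + ((M : ℂ)⁻¹) ^ 2 * ∑ w, c w)
  rw [AddChar.norm_apply] at h3
  linarith

/-- the off-diagonal part of each row of the compressed oracle indexed by `Y` is small -/
lemma sum_erase_norm_sq_cOMat_le (c : AddChar Y ℂ) (u : Y) :
    ∑ a ∈ Finset.univ.erase (some u), ‖cOMat c (some u) a‖ ^ 2 ≤ 8 / (Fintype.card Y : ℝ) := by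
  have h1 := sum_norm_sq_row_of_mem_unitary (cOMat_mem_unitary c) (some u)
  rw [← Finset.sum_erase_add _ _ (Finset.mem_univ (some u))] at h1
  have h2 := norm_cOMat_diag_ge c u
  have h3 := norm_nonneg (cOMat c (some u) (some u))
  have h4 : (8 : ℝ) / (Fintype.card Y : ℝ) = 2 * (4 / (Fintype.card Y : ℝ)) := by ring
  rw [h4]
  nlinarith [sq_nonneg (‖cOMat c (some u) (some u)‖ - 1)]

lemma norm_cOMat_diag_le (c : AddChar Y ℂ) (u : Option Y) : ‖cOMat c u u‖ ≤ 1 := by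
  have h1 := sum_norm_sq_row_of_mem_unitary (cOMat_mem_unitary c) u
  have h2 := Finset.single_le_sum (f := fun a => ‖cOMat c u a‖ ^ 2)
    (fun _ _ => sq_nonneg _) (Finset.mem_univ u)
  rw [h1] at h2
  exact (sq_le_one_iff₀ (norm_nonneg _)).1 h2

end Single

/-! ### Operators acting on one register of a database -/

section Lift

variable {X Y : Type*} [Fintype X] [DecidableEq X] [Fintype Y] [DecidableEq Y]

lemma liftMat_mulVec (x : X) (m : Matrix (Option Y) (Option Y) ℂ) (v : (X → Option Y) → ℂ)
    (D : X → Option Y) :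
    (liftMat x m).mulVec v D = ∑ a, m (D x) a * v (Function.update D x a) := by
  simp only [Matrix.mulVec, dotProduct]
  symm
  refine Finset.sum_of_injOn (Function.update D x) ?_ ?_ ?_ ?_
  · exact (Function.update_injective D x).injOn
  · intro _ _; simp
  · intro E _ hE
    rw [liftMat, Matrix.of_apply, if_neg, zero_mul]
    intro h
    refine hE ⟨E x, by simp, ?_⟩
    ext1 a
    by_cases ha : a = x
    · subst ha; simp
    · rw [Function.update_of_ne ha, h a ha]
  · intro a _
    rw [liftMat, Matrix.of_apply, if_pos, Function.update_self]
    intro b hb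
    rw [Function.update_of_ne hb]

lemma Matrix.eq_of_mulVec_eq {ι : Type*} [Fintype ι] [DecidableEq ι] {A B : Matrix ι ι ℂ}
    (h : ∀ v i, A.mulVec v i = B.mulVec v i) : A = B :=
  Matrix.mulVec_injective (funext fun v => funext fun i => h v i)

lemma liftMat_mul (x : X) (m n : Matrix (Option Y) (Option Y) ℂ) :
    liftMat x m * liftMat x n = liftMat x (m * n) := by
  refine Matrix.eq_of_mulVec_eq fun v D => ?_
  rw [← Matrix.mulVec_mulVec]
  simp only [liftMat_mulVec, Function.update_self, Function.update_idem, Matrix.mul_apply,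
    Finset.mul_sum, Finset.sum_mul, mul_assoc]
  exact Finset.sum_comm

lemma liftMat_one (x : X) : liftMat x (1 : Matrix (Option Y) (Option Y) ℂ) = 1 := by
  refine Matrix.eq_of_mulVec_eq fun v D => ?_
  simp [liftMat_mulVec, Matrix.one_apply]

omit [Fintype Y] in
lemma liftMat_conjTranspose (x : X) (m : Matrix (Option Y) (Option Y) ℂ) :
    (liftMat x m).conjTranspose = liftMat x m.conjTranspose := by
  ext D E
  simp only [Matrix.conjTranspose_apply, liftMat, Matrix.of_apply, eq_comm (a := D _)]
  split_ifs <;> simp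

lemma liftMat_mem_unitary (x : X) {m : Matrix (Option Y) (Option Y) ℂ}
    (hm : m ∈ Matrix.unitaryGroup (Option Y) ℂ) :
    liftMat x m ∈ Matrix.unitaryGroup (X → Option Y) ℂ := by
  rw [Matrix.mem_unitaryGroup_iff', Matrix.star_eq_conjTranspose, liftMat_conjTranspose,
    liftMat_mul, ← Matrix.star_eq_conjTranspose, Matrix.mem_unitaryGroup_iff'.1 hm, liftMat_one]

lemma liftMat_mul_mulVec {x y : X} (hxy : x ≠ y) (m n : Matrix (Option Y) (Option Y) ℂ)
    (v : (X → Option Y) → ℂ) (D : X → Option Y) :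
    (liftMat x m * liftMat y n).mulVec v D =
      ∑ a, ∑ b, m (D x) a * n (D y) b *
        v (Function.update (Function.update D x a) y b) := by
  rw [← Matrix.mulVec_mulVec]
  simp only [liftMat_mulVec, Function.update_of_ne hxy.symm, Finset.mul_sum, mul_assoc]

lemma liftMat_commute {x y : X} (hxy : x ≠ y) (m n : Matrix (Option Y) (Option Y) ℂ) :
    Commute (liftMat x m) (liftMat y n) := by
  refine Matrix.eq_of_mulVec_eq fun v D => ?_
  rw [liftMat_mul_mulVec hxy, liftMat_mul_mulVec hxy.symm, Finset.sum_comm]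
  refine Finset.sum_congr rfl fun a _ => Finset.sum_congr rfl fun b _ => ?_
  rw [Function.update_comm hxy, mul_comm (m _ _)]

lemma projMat_commute_liftMat {P : Set (X → Option Y)} {x : X}
    (hP : ∀ D a, Function.update D x a ∈ P ↔ D ∈ P) (m : Matrix (Option Y) (Option Y) ℂ) :
    Commute (projMat P) (liftMat x m) := by
  classical
  refine Matrix.eq_of_mulVec_eq fun v D => ?_
  rw [← Matrix.mulVec_mulVec, ← Matrix.mulVec_mulVec]
  simp only [projMat_mulVec, liftMat_mulVec, hP]
  split_ifs <;> simp

omit [DecidableEq Y] in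
/-- swapping the value of a register with an auxiliary value permutes the pairs -/
lemma sum_sum_update (x : X) (g : (X → Option Y) → Option Y → ℝ) :
    ∑ D, ∑ a, g (Function.update D x a) (D x) = ∑ D, ∑ a, g D a := by
  have hinv : Function.Involutive fun p : (X → Option Y) × Option Y =>
      (Function.update p.1 x p.2, p.1 x) := by
    rintro ⟨D, a⟩
    simp
  rw [← Fintype.sum_prod_type' (f := fun D a => g (Function.update D x a) (D x)),
    ← Fintype.sum_prod_type' (f := fun D a => g D a)]
  exact Equiv.sum_comp hinv.toPerm fun p : (X → Option Y) × Option Y => g p.1 p.2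

lemma norm_sum_mul_sq_le {ι : Type*} (s : Finset ι) (m f : ι → ℂ) :
    ‖∑ a ∈ s, m a * f a‖ ^ 2 ≤ (∑ a ∈ s, ‖m a‖ ^ 2) * ∑ a ∈ s, ‖f a‖ ^ 2 := by
  have h : ‖∑ a ∈ s, m a * f a‖ ≤ ∑ a ∈ s, ‖m a‖ * ‖f a‖ := by
    simpa only [norm_mul] using norm_sum_le s fun a => m a * f a
  exact (pow_le_pow_left₀ (norm_nonneg _) h 2).trans (Finset.sum_mul_sq_le_sq_mul_sq s _ _)

lemma norm_sum_erase_mul_sq_le {ι : Type*} [Fintype ι] [DecidableEq ι] {m : ι → ℂ} {u : ι} {ε : ℝ}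
    (hm : ∑ a ∈ Finset.univ.erase u, ‖m a‖ ^ 2 ≤ ε) (f : ι → ℂ) :
    ‖∑ a ∈ Finset.univ.erase u, m a * f a‖ ^ 2 ≤ ε * ∑ a, ‖f a‖ ^ 2 := by
  have hε : 0 ≤ ε := (Finset.sum_nonneg fun _ _ => sq_nonneg _).trans hm
  refine (norm_sum_mul_sq_le _ m f).trans ?_
  gcongr
  exact Finset.subset_univ _

lemma norm_sum_mul_sq_le_of_eq_zero {ι : Type*} [Fintype ι] [DecidableEq ι] {m : ι → ℂ} {u : ι}
    {ε : ℝ} (hm : ∑ a ∈ Finset.univ.erase u, ‖m a‖ ^ 2 ≤ ε) (f : ι → ℂ) (hf : f u = 0) :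
    ‖∑ a, m a * f a‖ ^ 2 ≤ ε * ∑ a, ‖f a‖ ^ 2 := by
  rw [← Finset.sum_erase_add _ _ (Finset.mem_univ u), hf, mul_zero, add_zero]
  exact norm_sum_erase_mul_sq_le hm f

lemma norm_add_add_sq_le (a b c : ℂ) :
    ‖a + b + c‖ ^ 2 ≤ 3 * (‖a‖ ^ 2 + ‖b‖ ^ 2 + ‖c‖ ^ 2) := by
  have h := norm_add₃_le (a := a) (b := b) (c := c)
  have h0 := norm_nonneg (a + b + c)
  nlinarith [sq_nonneg (‖a‖ - ‖b‖), sq_nonneg (‖a‖ - ‖c‖), sq_nonneg (‖b‖ - ‖c‖)]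

lemma norm_sum_sum_mul_sq_le {ι : Type*} [Fintype ι] [DecidableEq ι] {m n : ι → ℂ} {u : ι}
    {ε : ℝ} (hm : ∑ a ∈ Finset.univ.erase u, ‖m a‖ ^ 2 ≤ ε)
    (hn : ∑ a ∈ Finset.univ.erase u, ‖n a‖ ^ 2 ≤ ε) (hmu : ‖m u‖ ≤ 1) (hnu : ‖n u‖ ≤ 1)
    (f : ι → ι → ℂ) (hf : f u u = 0) :
    ‖∑ a, ∑ b, m a * n b * f a b‖ ^ 2 ≤
      3 * (ε * ∑ b, ‖f u b‖ ^ 2 + ε * ∑ a, ‖f a u‖ ^ 2 + ε ^ 2 * ∑ a, ∑ b, ‖f a b‖ ^ 2) := by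
  have hε : 0 ≤ ε := (Finset.sum_nonneg fun _ _ => sq_nonneg _).trans hm
  have hsplit : ∑ a, ∑ b, m a * n b * f a b =
      m u * ∑ b ∈ Finset.univ.erase u, n b * f u b
        + n u * ∑ a ∈ Finset.univ.erase u, m a * f a u
        + ∑ a ∈ Finset.univ.erase u, m a * ∑ b ∈ Finset.univ.erase u, n b * f a b := by
    rw [← Finset.sum_erase_add _ _ (Finset.mem_univ u)]
    simp only [← Finset.sum_erase_add _ _ (Finset.mem_univ u), hf, Finset.sum_add_distrib,
      Finset.mul_sum]
    simp only [← mul_assoc, mul_comm (n u) (m _), mul_zero, add_zero]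
    ring
  have hbound : ∀ {z : ℂ}, ‖z‖ ≤ 1 → ∀ w : ℂ, ‖z * w‖ ^ 2 ≤ ‖w‖ ^ 2 := by
    intro z hz w
    rw [norm_mul]
    gcongr
    exact mul_le_of_le_one_left (norm_nonneg _) hz
  rw [hsplit]
  refine (norm_add_add_sq_le _ _ _).trans ?_
  gcongr
  · exact (hbound hmu _).trans (norm_sum_erase_mul_sq_le hn _)
  · exact (hbound hnu _).trans (norm_sum_erase_mul_sq_le hm fun a => f a u)
  · refine (norm_sum_erase_mul_sq_le hm _).trans ?_
    rw [pow_two, mul_assoc]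
    refine mul_le_mul_of_nonneg_left ?_ hε
    rw [Finset.mul_sum]
    exact Finset.sum_le_sum fun a _ => norm_sum_erase_mul_sq_le hn _

lemma sqNorm_projMat_mem_liftMat_le (x : X) {m : Matrix (Option Y) (Option Y) ℂ} {ε : ℝ}
    (hm : ∀ u : Y, ∑ a ∈ Finset.univ.erase (some u), ‖m (some u) a‖ ^ 2 ≤ ε)
    (S : Finset Y) (v : (X → Option Y) → ℂ)
    (hv : ∀ D, D x ∈ S.map Function.Embedding.some → v D = 0) :
    sqNorm ((projMat {D | D x ∈ S.map Function.Embedding.some}).mulVec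
      ((liftMat x m).mulVec v)) ≤ S.card * ε * sqNorm v := by
  classical
  rw [sqNorm_projMat_mulVec]
  have h1 : ∀ D : X → Option Y,
      (if D ∈ {D : X → Option Y | D x ∈ S.map Function.Embedding.some} then
        ‖(liftMat x m).mulVec v D‖ ^ 2 else 0) ≤
      ∑ a, (if D x ∈ S.map Function.Embedding.some then
        ε * ‖v (Function.update D x a)‖ ^ 2 else 0) := by
    intro D
    by_cases h : D x ∈ S.map Function.Embedding.some
    · simp only [Set.mem_ofPred_eq, if_pos h]
      rw [liftMat_mulVec, ← Finset.mul_sum]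
      obtain ⟨u, -, hu⟩ := Finset.mem_map.1 h
      have hu : D x = some u := hu.symm
      refine norm_sum_mul_sq_le_of_eq_zero (u := D x) ?_ _ ?_
      · rw [hu]; exact hm u
      · rw [Function.update_eq_self]; exact hv D h
    · simp only [Set.mem_ofPred_eq, if_neg h, Finset.sum_const_zero, le_refl]
  refine (Finset.sum_le_sum fun D _ => h1 D).trans_eq ?_
  rw [sum_sum_update x fun D a => if a ∈ S.map Function.Embedding.some then ε * ‖v D‖ ^ 2 else 0]
  simp only [Finset.sum_ite_mem, Finset.univ_inter, Finset.sum_const, Finset.card_map,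
    nsmul_eq_mul, sqNorm, Finset.mul_sum, mul_assoc]

/-- the databases whose values at `x` and `y` form a collision -/
def collisionAt (x y : X) : Set (X → Option Y) := {D | D x = D y ∧ D x ≠ none}

lemma sqNorm_projMat_collisionAt_liftMat_le {x y : X} (hxy : x ≠ y)
    {m n : Matrix (Option Y) (Option Y) ℂ} {ε : ℝ}
    (hm : ∀ u : Y, ∑ a ∈ Finset.univ.erase (some u), ‖m (some u) a‖ ^ 2 ≤ ε)
    (hn : ∀ u : Y, ∑ a ∈ Finset.univ.erase (some u), ‖n (some u) a‖ ^ 2 ≤ ε)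
    (hm' : ∀ u, ‖m u u‖ ≤ 1) (hn' : ∀ u, ‖n u u‖ ≤ 1)
    (hε : 0 ≤ ε) (v : (X → Option Y) → ℂ) (hv : ∀ D ∈ collisionAt x y, v D = 0) :
    sqNorm ((projMat (collisionAt x y)).mulVec ((liftMat x m * liftMat y n).mulVec v)) ≤
      3 * (ε + ε + ε ^ 2 * Fintype.card Y) * sqNorm v := by
  classical
  rw [sqNorm_projMat_mulVec]
  let V : (X → Option Y) → ℝ := fun D => ‖v D‖ ^ 2
  have h1 : ∀ D : X → Option Y,
      (if D ∈ collisionAt x y then ‖(liftMat x m * liftMat y n).mulVec v D‖ ^ 2 else 0) ≤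
      3 * (ε * ∑ b, (if D x = D y then V (Function.update D y b) else 0)
        + ε * ∑ a, (if D y = D x then V (Function.update D x a) else 0)
        + ε ^ 2 * ∑ a, ∑ b, (if D x = D y ∧ D y ≠ none then
            V (Function.update (Function.update D x a) y b) else 0)) := by
    intro D
    by_cases h : D ∈ collisionAt x y
    · obtain ⟨u, hu⟩ := Option.ne_none_iff_exists'.1 h.2
      have hu' : D y = some u := h.1 ▸ hu
      have hx : Function.update D x (some u) = D := by rw [← hu, Function.update_eq_self]
      have hy : Function.update D y (some u) = D := by rw [← hu', Function.update_eq_self]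
      rw [if_pos h, liftMat_mul_mulVec hxy, hu, hu']
      have key := norm_sum_sum_mul_sq_le (hm u) (hn u) (hm' _) (hn' _)
        (fun a b => v (Function.update (Function.update D x a) y b))
        (by rw [hx, hy]; exact hv D h)
      refine key.trans_eq ?_
      have hc : ∀ a, Function.update (Function.update D x a) y (some u) =
          Function.update D x a := by
        intro a
        rw [Function.update_comm hxy, hy]
      simp [V, hx, hc]
    · rw [if_neg h]
      have hV : ∀ D, 0 ≤ V D := fun D => sq_nonneg _
      have hite : ∀ (p : Prop) [Decidable p] (E : X → Option Y), 0 ≤ if p then V E else 0 := by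
        intro p _ E
        split_ifs
        exacts [hV E, le_rfl]
      have hsum : ∀ g : Option Y → ℝ, (∀ a, 0 ≤ g a) → 0 ≤ ∑ a, g a := fun g hg =>
        Finset.sum_nonneg fun a _ => hg a
      have t1 := mul_nonneg hε (hsum _ fun b => hite (D x = D y) (Function.update D y b))
      have t2 := mul_nonneg hε (hsum _ fun a => hite (D y = D x) (Function.update D x a))
      have t3 := mul_nonneg (sq_nonneg ε) (hsum _ fun a => hsum _ fun b =>
        hite (D x = D y ∧ D y ≠ none) (Function.update (Function.update D x a) y b))
      linarith
  have s1 : ∑ D : X → Option Y, ∑ b, (if D x = D y then V (Function.update D y b) else 0) =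
      sqNorm v := by
    have := sum_sum_update y fun D a => if D x = a then V D else 0
    simp only [Function.update_of_ne hxy] at this
    rw [this]
    simp [sqNorm, V]
  have s2 : ∑ D : X → Option Y, ∑ a, (if D y = D x then V (Function.update D x a) else 0) =
      sqNorm v := by
    have := sum_sum_update x fun D a => if D y = a then V D else 0
    simp only [Function.update_of_ne hxy.symm] at this
    rw [this]
    simp [sqNorm, V]
  have s3 : ∑ D : X → Option Y, ∑ a, ∑ b, (if D x = D y ∧ D y ≠ none then
            V (Function.update (Function.update D x a) y b) else 0) =
      Fintype.card Y * sqNorm v := by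
    have e1 := sum_sum_update x fun D c => ∑ b, if c = D y ∧ D y ≠ none then
      V (Function.update D y b) else 0
    simp only [Function.update_of_ne hxy.symm] at e1
    rw [e1]
    have e2 := sum_sum_update y fun D d => ∑ c, if c = d ∧ d ≠ none then V D else 0
    have e3 : ∀ D : X → Option Y, ∑ c, ∑ b, (if c = D y ∧ D y ≠ none then
        V (Function.update D y b) else 0) =
        ∑ b, ∑ c, (if c = D y ∧ D y ≠ none then V (Function.update D y b) else 0) :=
      fun D => Finset.sum_comm
    rw [Finset.sum_congr rfl fun D _ => e3 D, e2]
    simp [sqNorm, V, Fintype.sum_option, Finset.mul_sum]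
  refine (Finset.sum_le_sum fun D _ => h1 D).trans_eq ?_
  rw [← Finset.mul_sum, Finset.sum_add_distrib, Finset.sum_add_distrib, ← Finset.mul_sum,
    ← Finset.mul_sum, ← Finset.mul_sum, s1, s2, s3]
  ring

end Lift

/-! ### Parallel queries -/

section Parallel

variable {X Y : Type*} [Fintype X] [DecidableEq X] [Fintype Y] [DecidableEq Y] [AddCommGroup Y]

lemma liftMat_cOMat_pairwise {k : ℕ} {x : Fin k → X} (hx : Function.Injective x)
    (c : Fin k → AddChar Y ℂ) (s : Set (Fin k)) :
    s.Pairwise fun i j =>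
      Commute (liftMat (x i) (cOMat (c i))) (liftMat (x j) (cOMat (c j))) :=
  fun _ _ _ _ hij => liftMat_commute (hx.ne hij) _ _

lemma cOparMat_eq_noncommProd {k : ℕ} {x : Fin k → X} (hx : Function.Injective x)
    (c : Fin k → AddChar Y ℂ) :
    cOparMat x c = Finset.univ.noncommProd (fun i => liftMat (x i) (cOMat (c i)))
      (liftMat_cOMat_pairwise hx c _) := by
  have h := Finset.noncommProd_toFinset (List.finRange k)
    (fun i => liftMat (x i) (cOMat (c i))) (liftMat_cOMat_pairwise hx c _) (List.nodup_finRange k)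
  rw [cOparMat, List.ofFn_eq_map, ← h]
  congr 1
  simp

/-- the registers outside `T` can be dropped when measuring a projection that commutes with them -/
lemma sqNorm_mul_noncommProd_mulVec {k : ℕ} {x : Fin k → X} (hx : Function.Injective x)
    (c : Fin k → AddChar Y ℂ) (T : Finset (Fin k))
    {A : Matrix (X → Option Y) (X → Option Y) ℂ}
    (hA : ∀ j ∈ T, Commute A (liftMat (x j) (cOMat (c j))))
    (V : Matrix (X → Option Y) (X → Option Y) ℂ)
    (hV : cOparMat x c = T.noncommProd (fun i => liftMat (x i) (cOMat (c i)))
      (liftMat_cOMat_pairwise hx c _) * V) (v : (X → Option Y) → ℂ) :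
    sqNorm (A.mulVec ((cOparMat x c).mulVec v)) = sqNorm (A.mulVec (V.mulVec v)) := by
  have hcomm := Finset.noncommProd_commute T (fun i => liftMat (x i) (cOMat (c i)))
    (liftMat_cOMat_pairwise hx c _) A hA
  have hmem := Finset.noncommProd_induction T (fun i => liftMat (x i) (cOMat (c i)))
    (liftMat_cOMat_pairwise hx c _) (· ∈ Matrix.unitaryGroup (X → Option Y) ℂ)
    (fun _ _ => mul_mem) (one_mem _) (fun i _ => liftMat_mem_unitary _ (cOMat_mem_unitary _))
  rw [hV, Matrix.mulVec_mulVec, ← mul_assoc, hcomm.eq, mul_assoc, ← Matrix.mulVec_mulVec,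
    sqNorm_mulVec_of_mem_unitary hmem, Matrix.mulVec_mulVec]

lemma sqNorm_projMat_mem_cOparMat_le {k : ℕ} {x : Fin k → X} (hx : Function.Injective x)
    (c : Fin k → AddChar Y ℂ) (i : Fin k) (S : Finset Y) (v : (X → Option Y) → ℂ)
    (hv : ∀ D, D (x i) ∈ S.map Function.Embedding.some → v D = 0) :
    sqNorm ((projMat {D | D (x i) ∈ S.map Function.Embedding.some}).mulVec
      ((cOparMat x c).mulVec v)) ≤ S.card * (8 / Fintype.card Y) * sqNorm v := by
  rw [sqNorm_mul_noncommProd_mulVec hx c (Finset.univ.erase i) _ (liftMat (x i) (cOMat (c i)))]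
  · exact sqNorm_projMat_mem_liftMat_le _ (sum_erase_norm_sq_cOMat_le _) _ _ hv
  · rw [cOparMat_eq_noncommProd hx]
    exact (Finset.noncommProd_erase_mul _ (Finset.mem_univ i) _ _).symm
  · intro j hj
    refine projMat_commute_liftMat (fun D a => ?_) _
    rw [Set.mem_ofPred_eq, Set.mem_ofPred_eq,
      Function.update_of_ne (hx.ne (Finset.ne_of_mem_erase hj).symm)]

lemma sqNorm_projMat_collisionAt_cOparMat_le {k : ℕ} {x : Fin k → X} (hx : Function.Injective x)
    (c : Fin k → AddChar Y ℂ) {i j : Fin k} (hij : i ≠ j) (v : (X → Option Y) → ℂ)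
    (hv : ∀ D ∈ collisionAt (x i) (x j), v D = 0) :
    sqNorm ((projMat (collisionAt (x i) (x j))).mulVec ((cOparMat x c).mulVec v)) ≤
      240 / Fintype.card Y * sqNorm v := by
  have hM : (Fintype.card Y : ℝ) ≠ 0 := Nat.cast_ne_zero.2 Fintype.card_ne_zero
  rw [sqNorm_mul_noncommProd_mulVec hx c ((Finset.univ.erase j).erase i) _
    (liftMat (x i) (cOMat (c i)) * liftMat (x j) (cOMat (c j)))]
  · refine (sqNorm_projMat_collisionAt_liftMat_le (hx.ne hij) (sum_erase_norm_sq_cOMat_le _)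
      (sum_erase_norm_sq_cOMat_le _) (norm_cOMat_diag_le _) (norm_cOMat_diag_le _)
      (by positivity) v hv).trans_eq ?_
    congr 1
    field_simp
    norm_num
  · rw [cOparMat_eq_noncommProd hx, ← mul_assoc,
      Finset.noncommProd_erase_mul _ (Finset.mem_erase.2 ⟨hij, Finset.mem_univ i⟩)
        (fun i => liftMat (x i) (cOMat (c i))) (liftMat_cOMat_pairwise hx c _),
      Finset.noncommProd_erase_mul _ (Finset.mem_univ j)
        (fun i => liftMat (x i) (cOMat (c i))) (liftMat_cOMat_pairwise hx c _)]
  · intro l hl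
    rw [Finset.mem_erase, Finset.mem_erase] at hl
    refine projMat_commute_liftMat (fun D a => ?_) _
    simp only [collisionAt, Set.mem_ofPred_eq, Function.update_of_ne (hx.ne hl.1.symm),
      Function.update_of_ne (hx.ne hl.2.1.symm)]

/-- the values of the database `D` outside of the positions `x` -/
def valuesOff {k : ℕ} (D : X → Option Y) (x : Fin k → X) : Finset Y := by
  classical exact Finset.univ.filter fun y => ∃ b, (∀ i, x i ≠ b) ∧ D b = some y

omit [AddCommGroup Y] in
lemma mem_map_valuesOff {k : ℕ} {D : X → Option Y} {x : Fin k → X} {o : Option Y} :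
    o ∈ (valuesOff D x).map Function.Embedding.some ↔
      o ≠ none ∧ ∃ b, (∀ i, x i ≠ b) ∧ D b = o := by
  rcases o with _ | y <;> simp [valuesOff]

omit [AddCommGroup Y] in
lemma card_valuesOff_le {k t : ℕ} {D : X → Option Y} (hD : D ∈ SIZE t) (x : Fin k → X) :
    (valuesOff D x).card ≤ t := by
  classical
  refine le_trans ?_ hD.2
  rw [Set.ncard_eq_toFinset_card _ hD.1, ← Finset.card_map Function.Embedding.some]
  refine Finset.card_le_card_of_surjOn D fun o ho => ?_
  obtain ⟨hne, b, -, hb⟩ := mem_map_valuesOff.1 ho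
  exact ⟨b, by simp [hb, hne], hb⟩

omit [Fintype X] [DecidableEq X] [Fintype Y] [DecidableEq Y] [AddCommGroup Y] in
lemma agreeOff_eq {k : ℕ} {D E : X → Option Y} {x : Fin k → X} (hE : E ∈ agreeOff D x) :
    agreeOff D x = agreeOff E x := by
  ext F
  exact forall₂_congr fun a ha => by rw [hE a ha]

omit [AddCommGroup Y] in
lemma mem_CL_inter_agreeOff {k : ℕ} {x : Fin k → X} {D E : X → Option Y} (hD : D ∉ CL)
    (hE : E ∈ CL ∩ agreeOff D x) :
    (∃ i, E (x i) ∈ (valuesOff D x).map Function.Embedding.some) ∨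
      ∃ i j, i ≠ j ∧ E ∈ collisionAt (x i) (x j) := by
  obtain ⟨⟨a, b, hab, heq, hne⟩, hagree⟩ := hE
  by_cases ha : ∃ i, x i = a <;> by_cases hb : ∃ j, x j = b
  · obtain ⟨i, rfl⟩ := ha
    obtain ⟨j, rfl⟩ := hb
    exact Or.inr ⟨i, j, fun h => hab (h ▸ rfl), heq, hne⟩
  · obtain ⟨i, rfl⟩ := ha
    push Not at hb
    exact Or.inl ⟨i, mem_map_valuesOff.2 ⟨hne, b, hb, by rw [← hagree b hb, heq]⟩⟩
  · obtain ⟨j, rfl⟩ := hb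
    push Not at ha
    exact Or.inl ⟨j, mem_map_valuesOff.2 ⟨heq ▸ hne, a, ha, by rw [← hagree a ha, heq]⟩⟩
  · push Not at ha hb
    exact absurd ⟨a, b, hab, by rw [← hagree a ha, ← hagree b hb, heq], hagree a ha ▸ hne⟩ hD

lemma sqNorm_CL_cOparMat_le {k t : ℕ} {x : Fin k → X} (hx : Function.Injective x)
    (c : Fin k → AddChar Y ℂ) {D : X → Option Y} (hD : D ∈ SIZE t \ CL)
    (v : (X → Option Y) → ℂ) (hv : ∀ E ∉ (SIZE t \ CL) ∩ agreeOff D x, v E = 0) :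
    sqNorm ((projMat (CL ∩ agreeOff D x)).mulVec ((cOparMat x c).mulVec v)) ≤
      (k * t * 8 + k * k * 240) / Fintype.card Y * sqNorm v := by
  classical
  set S := valuesOff D x with hS
  set w := (cOparMat x c).mulVec v with hw
  have hv1 : ∀ (i : Fin k) (E : X → Option Y),
      E (x i) ∈ S.map Function.Embedding.some → v E = 0 := by
    intro i E hE
    refine hv E fun ⟨⟨_, hCL⟩, hagree⟩ => hCL ?_
    obtain ⟨hne, b, hb, hDb⟩ := mem_map_valuesOff.1 hE
    exact ⟨x i, b, hb i, by rw [hagree b hb, hDb], hne⟩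
  have hv2 : ∀ i j : Fin k, i ≠ j → ∀ E ∈ collisionAt (x i) (x j), v E = 0 := by
    intro i j hij E hE
    exact hv E fun ⟨⟨_, hCL⟩, _⟩ => hCL ⟨x i, x j, hx.ne hij, hE.1, hE.2⟩
  have hunion : sqNorm ((projMat (CL ∩ agreeOff D x)).mulVec w) ≤
      ∑ i, sqNorm ((projMat {E | E (x i) ∈ S.map Function.Embedding.some}).mulVec w) +
        ∑ i, ∑ j, if i ≠ j then sqNorm ((projMat (collisionAt (x i) (x j))).mulVec w) else 0 := by
    have hnn : ∀ (p : Prop) [Decidable p] (r : ℝ), 0 ≤ r → 0 ≤ if p then r else 0 := by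
      intro p _ r hr
      split_ifs
      exacts [hr, le_rfl]
    simp only [sqNorm_projMat_mulVec]
    have hpoint : ∀ E, (if E ∈ CL ∩ agreeOff D x then ‖w E‖ ^ 2 else 0) ≤
        ∑ i, (if E ∈ {E : X → Option Y | E (x i) ∈ S.map Function.Embedding.some} then
            ‖w E‖ ^ 2 else 0) +
          ∑ i, ∑ j, if i ≠ j then (if E ∈ collisionAt (x i) (x j) then ‖w E‖ ^ 2 else 0)
            else 0 := by
      intro E
      have hn1 : ∀ i ∈ Finset.univ, 0 ≤
          if E ∈ {E : X → Option Y | E (x i) ∈ S.map Function.Embedding.some} then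
            ‖w E‖ ^ 2 else 0 := fun i _ => hnn _ _ (sq_nonneg _)
      have hn3 : ∀ i, ∀ j ∈ Finset.univ, 0 ≤ if i ≠ j then
          (if E ∈ collisionAt (x i) (x j) then ‖w E‖ ^ 2 else 0) else 0 :=
        fun i j _ => hnn _ _ (hnn _ _ (sq_nonneg _))
      have hn2 : ∀ i ∈ Finset.univ, 0 ≤ ∑ j, if i ≠ j then
          (if E ∈ collisionAt (x i) (x j) then ‖w E‖ ^ 2 else 0) else 0 :=
        fun i _ => Finset.sum_nonneg (hn3 i)
      by_cases hE : E ∈ CL ∩ agreeOff D x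
      · rw [if_pos hE]
        rcases mem_CL_inter_agreeOff hD.2 hE with ⟨i, hi⟩ | ⟨i, j, hij, hcol⟩
        · have h1 := Finset.single_le_sum hn1 (Finset.mem_univ i)
          rw [if_pos (show E ∈ {E : X → Option Y | E (x i) ∈ S.map Function.Embedding.some}
            from hi)] at h1
          linarith [Finset.sum_nonneg hn2]
        · have h1 := Finset.single_le_sum hn2 (Finset.mem_univ i)
          have h2 := Finset.single_le_sum (hn3 i) (Finset.mem_univ j)
          rw [if_pos hij, if_pos hcol] at h2
          linarith [Finset.sum_nonneg hn1]
      · rw [if_neg hE]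
        exact add_nonneg (Finset.sum_nonneg hn1) (Finset.sum_nonneg hn2)
    refine (Finset.sum_le_sum fun E _ => hpoint E).trans_eq ?_
    rw [Finset.sum_add_distrib, Finset.sum_comm]
    congr 1
    rw [Finset.sum_comm]
    refine Finset.sum_congr rfl fun i _ => ?_
    rw [Finset.sum_comm]
    refine Finset.sum_congr rfl fun j _ => ?_
    split_ifs <;> simp
  have hN := sqNorm_nonneg v
  have hcard : (S.card : ℝ) ≤ t := by exact_mod_cast card_valuesOff_le hD.1 x
  have hb1 : ∀ i : Fin k,
      sqNorm ((projMat {E | E (x i) ∈ S.map Function.Embedding.some}).mulVec w) ≤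
        t * (8 / Fintype.card Y) * sqNorm v := by
    intro i
    refine (sqNorm_projMat_mem_cOparMat_le hx c i S v (hv1 i)).trans ?_
    gcongr
  have hb2 : ∀ i j : Fin k,
      (if i ≠ j then sqNorm ((projMat (collisionAt (x i) (x j))).mulVec w) else 0) ≤
        240 / Fintype.card Y * sqNorm v := by
    intro i j
    split_ifs with hij
    · exact sqNorm_projMat_collisionAt_cOparMat_le hx c hij v (hv2 i j hij)
    · positivity
  refine hunion.trans ((add_le_add (Finset.sum_le_sum fun i _ => hb1 i)
    (Finset.sum_le_sum fun i _ => Finset.sum_le_sum fun j _ => hb2 i j)).trans_eq ?_)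
  simp only [Finset.sum_const, Finset.card_univ, Fintype.card_fin, nsmul_eq_mul]
  ring

end Parallel

theorem stmt_15 {X Y : Type*} [Fintype X] [DecidableEq X] [Nonempty X]
    [Fintype Y] [DecidableEq Y] [AddCommGroup Y]
    (k q s : ℕ) (hk : 1 ≤ k) (hq : 1 ≤ q) (hs : s ≤ q) :
    qtc (X := X) (Y := Y) (SIZE (k * s) \ CL) CL k Set.univ
      ≤ 2 * Real.exp 1 * k * Real.sqrt (10 * (q + 1) / Fintype.card Y) := by
  have hM : (0 : ℝ) < Fintype.card Y := by exact_mod_cast Fintype.card_pos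
  have hexp := Real.exp_one_gt_d9
  refine Real.sSup_le ?_ (by positivity)
  rintro _ ⟨x, c, D, hx, -, rfl⟩
  refine ContinuousLinearMap.opNorm_le_bound _ (by positivity) fun ψ => ?_
  refine le_of_sq_le_sq ?_ (by positivity)
  set Q : Set (X → Option Y) := (SIZE (k * s) \ CL) ∩ agreeOff D x with hQ
  set v := (projMat Q).mulVec ψ.ofLp with hv
  have hvQ : ∀ E ∉ Q, v E = 0 := by
    classical
    intro E hE
    rw [hv, projMat_mulVec, if_neg hE]
  have hvle : sqNorm v ≤ ‖ψ‖ ^ 2 := by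
    rw [EuclideanSpace.norm_sq_eq]
    exact sqNorm_projMat_mulVec_le _ _
  rw [ContinuousLinearMap.comp_apply, ContinuousLinearMap.comp_apply, norm_toOp_sq, ofLp_toOp,
    ofLp_toOp, ← hv]
  rcases Q.eq_empty_or_nonempty with hemp | ⟨E, hE⟩
  · have hv0 : v = 0 := funext fun E => hvQ E (by simp [hemp])
    rw [hv0, Matrix.mulVec_zero, Matrix.mulVec_zero]
    simp only [sqNorm, Pi.zero_apply, norm_zero]
    norm_num
    positivity
  · rw [agreeOff_eq hE.2] at hQ ⊢
    refine (sqNorm_CL_cOparMat_le hx c hE.1 v (hQ ▸ hvQ)).trans ?_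
    rw [mul_pow, mul_pow, mul_pow, mul_pow, Real.sq_sqrt (by positivity)]
    refine mul_le_mul ?_ hvle (sqNorm_nonneg _) (by positivity)
    rw [← mul_div_assoc]
    refine div_le_div_of_nonneg_right ?_ hM.le
    have hs' : (s : ℝ) ≤ q := by exact_mod_cast hs
    have hq' : (0 : ℝ) ≤ q := by positivity
    have he : (7.2 : ℝ) ≤ Real.exp 1 ^ 2 := by nlinarith
    have hk2 : (0 : ℝ) ≤ (k : ℝ) ^ 2 := by positivity
    push_cast
    calc (k : ℝ) * (k * s) * 8 + k * k * 240 = k ^ 2 * (8 * s + 240) := by ring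
      _ ≤ k ^ 2 * (288 * (q + 1)) := by gcongr; linarith
      _ = 2 ^ 2 * 7.2 * k ^ 2 * (10 * (q + 1)) := by ring
      _ ≤ 2 ^ 2 * Real.exp 1 ^ 2 * k ^ 2 * (10 * (q + 1)) := by gcongr
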